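/- Let θ : A → A^ℓ be a primitive substitution of constant length ℓ over a finite alphabet A which is one-to-one as a map A → A^ℓ, has a coincidence of order k, and whose subshift X_θ is infinite. Set Θ = θ^k, a substitution of constant length |Θ| = ℓ^k. Then 1 ≤ log|Θ| / (log|Θ| − log(|Θ| − C(Θ))) ≤ ac_(σ|_{X_θ}) ≤ ac¯(σ|_{X_θ}) ≤ log|Θ| / (log|Θ| − log(|Θ| − c(Θ))) < ∞. -/

import Mathlib

open Filter Topology Set MeasureTheory
open scoped ENNReal

noncomputable section

/-- The upper density of a set of natural numbers. -/
def upperDensity (E : Set ℕ) : ℝ :=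
  Filter.limsup (fun n : ℕ =>
    (∑ k ∈ Finset.range n, E.indicator (fun _ => (1 : ℝ)) k) / n) Filter.atTop

/-- `S` is an `(f,δ,ν)`-separated subset of `X`, with respect to the distance `ρ`. -/
def IsSepSet {α : Type*} (ρ : α → α → ℝ) (f : α → α) (X : Set α) (δ ν : ℝ) (S : Set α) : Prop :=
  S ⊆ X ∧ ∀ x ∈ S, ∀ y ∈ S, x ≠ y → ν ≤ upperDensity {k : ℕ | δ ≤ ρ (f^[k] x) (f^[k] y)}

/-- The asymptotic separation number `Sep(f,δ,ν)` of `f` on `X`. -/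
def sepNum {α : Type*} (ρ : α → α → ℝ) (f : α → α) (X : Set α) (δ ν : ℝ) : ℕ∞ :=
  ⨆ (S : Set α) (_ : IsSepSet ρ f X δ ν S), S.encard

/-- The quantity `log s / (- log ν)`, with value `∞` if `s = ∞`. -/
def logRatio (s : ℕ∞) (ν : ℝ) : ℝ≥0∞ :=
  if s = ⊤ then ⊤ else ENNReal.ofReal (Real.log (s.toNat : ℝ) / (- Real.log ν))

/-- The lower amorphic complexity of `f` on `X`. -/
def acLower {α : Type*} (ρ : α → α → ℝ) (f : α → α) (X : Set α) : ℝ≥0∞ :=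
  ⨆ (δ : ℝ) (_ : 0 < δ),
    Filter.liminf (fun ν : ℝ => logRatio (sepNum ρ f X δ ν) ν) (𝓝[>] (0 : ℝ))

/-- The upper amorphic complexity of `f` on `X`. -/
def acUpper {α : Type*} (ρ : α → α → ℝ) (f : α → α) (X : Set α) : ℝ≥0∞ :=
  ⨆ (δ : ℝ) (_ : 0 < δ),
    Filter.limsup (fun ν : ℝ => logRatio (sepNum ρ f X δ ν) ν) (𝓝[>] (0 : ℝ))

/-- The left shift on `A^ℤ`. -/
def shift {A : Type*} (x : ℤ → A) : ℤ → A := fun n => x (n + 1)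

open scoped Classical in
/-- The Cantor metric `d(x,y) = 2^{-min{|k| : x_k ≠ y_k}}` on `A^ℤ`. -/
def cantorDist {A : Type*} (x y : ℤ → A) : ℝ :=
  if x = y then 0
  else (2 : ℝ) ^ (-((sInf {n : ℕ | ∃ k : ℤ, k.natAbs = n ∧ x k ≠ y k} : ℕ) : ℤ))

/-- The Besicovitch pseudometric `D_1` on `A^ℤ`. -/
def besD1 {A : Type*} (x y : ℤ → A) : ℝ :=
  upperDensity {k : ℕ | x (k : ℤ) ≠ y (k : ℤ)}

/-- The Besicovitch pseudometric `D_B` associated to a map `f` and a distance `ρ`. -/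
def besDB {α : Type*} (ρ : α → α → ℝ) (f : α → α) (x y : α) : ℝ :=
  Filter.limsup (fun n : ℕ => (∑ k ∈ Finset.range n, ρ (f^[k] x) (f^[k] y)) / n) Filter.atTop

/-- The pseudometric `D_δ` on `A^ℤ` associated to a metric `ρ` on `A^ℤ`. -/
def Ddelta {A : Type*} (ρ : (ℤ → A) → (ℤ → A) → ℝ) (δ : ℝ) (x y : ℤ → A) : ℝ :=
  upperDensity {k : ℕ | δ ≤ ρ (shift^[k] x) (shift^[k] y)}

/-- The closure of the two-sided shift orbit of `x₀`. -/
def orbitClosure {A : Type*} [TopologicalSpace A] (x₀ : ℤ → A) : Set (ℤ → A) :=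
  closure {y | ∃ k : ℤ, y = fun n => x₀ (n + k)}

/-- The extension of a constant length substitution `θ : A → A^ℓ` to `A^ℤ`,
via `θ(x)_{ℓk+i} = θ(x_k)_i`. -/
def substApply {A : Type*} {ℓ : ℕ} (hℓ : 0 < ℓ) (θ : A → Fin ℓ → A)
    (x : ℤ → A) : ℤ → A := fun n =>
  θ (x (n / (ℓ : ℤ))) ⟨(n % (ℓ : ℤ)).toNat, by
    have h1 : 0 ≤ n % (ℓ : ℤ) := Int.emod_nonneg n (by exact_mod_cast hℓ.ne')
    have h2 : n % (ℓ : ℤ) < (ℓ : ℤ) := Int.emod_lt_of_pos n (by exact_mod_cast hℓ)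
    omega⟩

/-- A constant length substitution is primitive if some power `θ^m` of it is such that
every letter `b` occurs in every word `θ^m(a)`. -/
def IsPrimitive {A : Type*} {ℓ : ℕ} (hℓ : 0 < ℓ) (θ : A → Fin ℓ → A) : Prop :=
  ∃ m : ℕ, 1 ≤ m ∧ ∀ a b : A, ∃ j : ℤ, 0 ≤ j ∧ j < (ℓ : ℤ) ^ m ∧
    (substApply hℓ θ)^[m] (fun _ => a) j = b

open scoped Classical in
/-- The number of positions at which the words `θ(a)` and `θ(b)` agree. -/
def coincCount {A : Type*} {ℓ : ℕ} (θ : A → Fin ℓ → A) (a b : A) : ℕ :=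
  (Finset.univ.filter (fun j : Fin ℓ => θ a j = θ b j)).card

/-- `c(θ)`, the minimum of `coincCount θ a b` over pairs `a ≠ b`. -/
def cMin {A : Type*} {ℓ : ℕ} (θ : A → Fin ℓ → A) : ℕ :=
  sInf {n : ℕ | ∃ a b : A, a ≠ b ∧ coincCount θ a b = n}

/-- `C(θ)`, the maximum of `coincCount θ a b` over pairs `a ≠ b`. -/
def cMax {A : Type*} {ℓ : ℕ} (θ : A → Fin ℓ → A) : ℕ :=
  sSup {n : ℕ | ∃ a b : A, a ≠ b ∧ coincCount θ a b = n}

/-- `S` is `ε`-separated with respect to the distance `ρ`. -/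
def IsEpsSeparated {α : Type*} (ρ : α → α → ℝ) (ε : ℝ) (S : Set α) : Prop :=
  ∀ x ∈ S, ∀ y ∈ S, x ≠ y → ε ≤ ρ x y

/-- `M_ε(E)`: the maximal cardinality of an `ε`-separated subset of `E`. -/
def packNum {α : Type*} (ρ : α → α → ℝ) (ε : ℝ) (E : Set α) : ℕ∞ :=
  ⨆ (S : Set α) (_ : S ⊆ E ∧ IsEpsSeparated ρ ε S), S.encard

/-- The lower box dimension of `E` with respect to the distance `ρ`. -/
def lowerBoxDim {α : Type*} (ρ : α → α → ℝ) (E : Set α) : ℝ≥0∞ :=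
  Filter.liminf (fun ε : ℝ => logRatio (packNum ρ ε E) ε) (𝓝[>] (0 : ℝ))

/-- The upper box dimension of `E` with respect to the distance `ρ`. -/
def upperBoxDim {α : Type*} (ρ : α → α → ℝ) (E : Set α) : ℝ≥0∞ :=
  Filter.limsup (fun ε : ℝ => logRatio (packNum ρ ε E) ε) (𝓝[>] (0 : ℝ))

/-- Mean equicontinuity of `f` on `X` with respect to the distance `ρ`. -/
def MeanEquicontinuousOn {α : Type*} (ρ : α → α → ℝ) (f : α → α) (X : Set α) : Prop :=
  ∀ ν : ℝ, 0 < ν → ∃ δ : ℝ, 0 < δ ∧ ∀ x ∈ X, ∀ y ∈ X, ρ x y < δ → besDB ρ f x y < ν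

/-- The subshift `X` has discrete spectrum: for every shift-invariant Borel probability
measure giving `X` full measure (there is exactly one for the systems under consideration),
`L²` has a Hilbert basis of eigenfunctions of the shift. -/
def HasDiscreteSpectrum {A : Type*} [MeasurableSpace A] (X : Set (ℤ → A)) : Prop :=
  ∀ μ : Measure (ℤ → A), IsProbabilityMeasure μ → MeasurePreserving shift μ μ → μ X = 1 →
    ∃ (ι : Type) (b : HilbertBasis ι ℂ (Lp ℂ 2 μ)), ∀ i : ι, ∃ c : ℂ,
      (fun z => (b i : Lp ℂ 2 μ) (shift z)) =ᵐ[μ] (fun z => c * (b i : Lp ℂ 2 μ) z)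

end

/-!
Replacing `θ` by `Θ = θ ^ k`, we may assume that `θ` itself has a column of coincidences.
Let `D(x, y)` be the upper density of the set of positions at which `x` and `y` differ. For
every fixed `δ`, the `δ`-separation density of the shift is comparable to `D`. Two distinct
letters have images that differ in at least `ℓ - C` and at most `ℓ - c` places, so `θ`
multiplies `D` by a factor between `(ℓ - C) / ℓ` and `(ℓ - c) / ℓ`.

*Upper bound.* A point of `X_θ` is a shift of `θ ^ n z` by one of `ℓ ^ n` offsets. Two
points with the same offset satisfy `D ≤ ((ℓ - c) / ℓ) ^ n`, so a set that is separated at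
this scale has at most `ℓ ^ n` elements.

*Lower bound.* Let `u` be a one-sided fixed point. By recognizability, `D(u, σ ^ t u)` is
bounded below uniformly in all `t` with `ℓ ∤ t`. Writing `d = ℓ ^ m t` with `ℓ ∤ t` and
applying `θ ^ m` gives `D(u, σ ^ d u) ≥ const * ((ℓ - C) / ℓ) ^ m`, so the first `ℓ ^ n`
shifts of `u` are separated at scale `((ℓ - C) / ℓ) ^ n`.

*Recognizability.* If arbitrarily long words occurred in `u` at positions that are
incongruent modulo `ℓ`, then each power `θ ^ M` would desubstitute some misaligned shift of
`u`, via a two-block code applied to `u`. There are finitely many such codes, so two powers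
share one, and this makes `u` eventually periodic. Injectivity of `θ` allows the period to
be divided by its common factors with `ℓ`; once it is coprime to `ℓ`, the tail can be read
along the coincidence column, so it is constant, against primitivity.
-/

section UpperDensity

variable {E F : Set ℕ}

theorem upperDensity_eq_limsup_count (E : Set ℕ) [DecidablePred (· ∈ E)] :
    upperDensity E = limsup (fun n : ℕ => (Nat.count (· ∈ E) n : ℝ) / n) atTop := by
  simp only [upperDensity, Nat.count_eq_card_filter_range, Finset.card_filter,
    Set.indicator_apply, Nat.cast_sum, Nat.cast_ite, Nat.cast_one, Nat.cast_zero]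

theorem count_div_nonneg (E : Set ℕ) [DecidablePred (· ∈ E)] (n : ℕ) :
    0 ≤ (Nat.count (· ∈ E) n : ℝ) / n := by
  positivity

theorem count_div_le_one (E : Set ℕ) [DecidablePred (· ∈ E)] (n : ℕ) :
    (Nat.count (· ∈ E) n : ℝ) / n ≤ 1 :=
  div_le_one_of_le₀ (Nat.cast_le.2 (Nat.count_le _)) n.cast_nonneg

theorem isBoundedUnder_count_div (E : Set ℕ) [DecidablePred (· ∈ E)] :
    IsBoundedUnder (· ≤ ·) atTop fun n : ℕ => (Nat.count (· ∈ E) n : ℝ) / n :=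
  isBoundedUnder_of ⟨1, count_div_le_one E⟩

theorem isCoboundedUnder_count_div (E : Set ℕ) [DecidablePred (· ∈ E)] :
    IsCoboundedUnder (· ≤ ·) atTop fun n : ℕ => (Nat.count (· ∈ E) n : ℝ) / n :=
  (isBoundedUnder_of ⟨0, count_div_nonneg E⟩).isCoboundedUnder_le

theorem upperDensity_nonneg (E : Set ℕ) : 0 ≤ upperDensity E := by
  classical
  rw [upperDensity_eq_limsup_count]
  exact le_limsup_of_frequently_le (Frequently.of_forall (count_div_nonneg E))
    (isBoundedUnder_count_div E)

theorem upperDensity_empty : upperDensity ∅ = 0 := by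
  simp [upperDensity]

theorem upperDensity_univ : upperDensity univ = 1 := by
  classical
  rw [upperDensity_eq_limsup_count]
  refine Tendsto.limsup_eq (tendsto_const_nhds.congr' ?_)
  filter_upwards [eventually_gt_atTop 0] with n hn
  have hn' : (n : ℝ) ≠ 0 := by positivity
  simp [Nat.count_true, hn']

theorem eventually_count_le_of_upperDensity_lt [DecidablePred (· ∈ E)] {b : ℝ}
    (h : upperDensity E < b) :
    ∀ᶠ n : ℕ in atTop, (Nat.count (· ∈ E) n : ℝ) ≤ b * n := by
  rw [upperDensity_eq_limsup_count] at h
  filter_upwards [eventually_lt_of_limsup_lt h (isBoundedUnder_count_div E),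
    eventually_gt_atTop 0] with n hn hpos
  exact ((div_lt_iff₀ (by positivity)).1 hn).le

theorem upperDensity_le_of_eventually_count_le [DecidablePred (· ∈ E)] {b C : ℝ}
    (h : ∀ᶠ n : ℕ in atTop, (Nat.count (· ∈ E) n : ℝ) ≤ b * n + C) : upperDensity E ≤ b := by
  have hlim : Tendsto (fun n : ℕ => b + C / n) atTop (𝓝 b) := by
    simpa using tendsto_const_nhds.add (tendsto_const_div_atTop_nhds_zero_nat C)
  rw [upperDensity_eq_limsup_count, ← hlim.limsup_eq]
  refine limsup_le_limsup ?_ (isCoboundedUnder_count_div E) hlim.isBoundedUnder_le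
  filter_upwards [h, eventually_gt_atTop 0] with n hn hpos
  rw [div_le_iff₀ (by positivity), add_mul, div_mul_cancel₀ _ (by positivity)]
  exact hn

theorem le_of_forall_gt_le_mul {a c d : ℝ} (h : ∀ b, d < b → a ≤ c * b) : a ≤ c * d :=
  ge_of_tendsto (((continuous_const_mul c).tendsto d).mono_left nhdsWithin_le_nhds)
    (eventually_nhdsWithin_of_forall (s := Ioi d) h)

theorem upperDensity_le_div_mul_of_count_le [DecidablePred (· ∈ E)] [DecidablePred (· ∈ F)]
    {ℓ D C : ℕ} (hℓ : 0 < ℓ)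
    (h : ∀ n, Nat.count (· ∈ F) (ℓ * n) ≤ D * Nat.count (· ∈ E) n + C) :
    upperDensity F ≤ D / ℓ * upperDensity E := by
  refine le_of_forall_gt_le_mul fun b hb => ?_
  have hb0 : 0 ≤ b := (upperDensity_nonneg E).trans hb.le
  have hblocks : Tendsto (fun n : ℕ => n / ℓ + 1) atTop atTop :=
    (tendsto_add_atTop_nat 1).comp (Nat.tendsto_div_const_atTop hℓ.ne')
  refine upperDensity_le_of_eventually_count_le (C := D * b + C) ?_
  filter_upwards [hblocks.eventually (eventually_count_le_of_upperDensity_lt hb)] with n hn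
  have hround : n ≤ ℓ * (n / ℓ + 1) := (Nat.lt_mul_div_succ n hℓ).le
  calc (Nat.count (· ∈ F) n : ℝ)
      ≤ D * Nat.count (· ∈ E) (n / ℓ + 1) + C :=
        mod_cast (Nat.count_monotone _ hround).trans (h _)
    _ ≤ D * (b * (n / ℓ + 1)) + C := by
        gcongr
        refine hn.trans (mul_le_mul_of_nonneg_left ?_ hb0)
        push_cast
        gcongr
        exact Nat.cast_div_le
    _ = D / ℓ * b * n + (D * b + C) := by ring

theorem div_mul_upperDensity_le_of_le_count [DecidablePred (· ∈ E)] [DecidablePred (· ∈ F)]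
    {ℓ D : ℕ} (hℓ : 0 < ℓ)
    (h : ∀ n, D * Nat.count (· ∈ E) n ≤ Nat.count (· ∈ F) (ℓ * n)) :
    D / ℓ * upperDensity E ≤ upperDensity F := by
  rcases D.eq_zero_or_pos with rfl | hD
  · simpa using upperDensity_nonneg F
  suffices upperDensity E ≤ ℓ / D * upperDensity F by
    rwa [div_mul_eq_mul_div, div_le_iff₀ (by positivity), mul_comm, mul_comm _ (ℓ : ℝ),
      ← le_div_iff₀ (by positivity), ← div_mul_eq_mul_div]
  refine le_of_forall_gt_le_mul fun b hb => ?_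
  have hblocks : Tendsto (fun n : ℕ => ℓ * n) atTop atTop :=
    (strictMono_mul_left_of_pos hℓ).tendsto_atTop
  refine upperDensity_le_of_eventually_count_le (C := 0) ?_
  filter_upwards [hblocks.eventually (eventually_count_le_of_upperDensity_lt hb)] with n hn
  have hDn : (D * Nat.count (· ∈ E) n : ℝ) ≤ b * (ℓ * n : ℕ) := le_trans (mod_cast h n) hn
  rw [← le_div_iff₀' (by positivity)] at hDn
  refine hDn.trans_eq ?_
  push_cast
  ring

theorem upperDensity_mono (h : E ⊆ F) : upperDensity E ≤ upperDensity F := by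
  classical
  simpa using upperDensity_le_div_mul_of_count_le (E := F) (F := E) (D := 1) (C := 0) one_pos
    fun n => by simpa using Nat.count_mono_left (n := n) fun k _ hk => h hk

theorem upperDensity_union_le (E F : Set ℕ) :
    upperDensity (E ∪ F) ≤ upperDensity E + upperDensity F := by
  classical
  refine le_of_forall_pos_le_add fun ε hε => ?_
  refine upperDensity_le_of_eventually_count_le (C := 0) ?_
  filter_upwards [eventually_count_le_of_upperDensity_lt (lt_add_of_pos_right (upperDensity E)
      (half_pos hε)), eventually_count_le_of_upperDensity_lt
      (lt_add_of_pos_right (upperDensity F) (half_pos hε))] with n hE hF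
  have hunion : Nat.count (· ∈ E ∪ F) n ≤ Nat.count (· ∈ E) n + Nat.count (· ∈ F) n := by
    simp only [Nat.count_eq_card_filter_range, mem_union, Finset.filter_or]
    exact Finset.card_union_le _ _
  have hunion' : (Nat.count (· ∈ E ∪ F) n : ℝ) ≤ Nat.count (· ∈ E) n + Nat.count (· ∈ F) n :=
    mod_cast hunion
  linear_combination hunion' + hE + hF

theorem upperDensity_biUnion_le {ι : Type*} (s : Finset ι) (E : ι → Set ℕ) :
    upperDensity (⋃ i ∈ s, E i) ≤ ∑ i ∈ s, upperDensity (E i) := by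
  classical
  induction s using Finset.induction_on with
  | empty => simp [upperDensity_empty]
  | insert i s hi ih =>
    rw [Finset.set_biUnion_insert, Finset.sum_insert hi]
    exact (upperDensity_union_le _ _).trans (by gcongr)

theorem upperDensity_preimage_add_right (E : Set ℕ) (i : ℕ) :
    upperDensity {k | k + i ∈ E} = upperDensity E := by
  classical
  have hcount (n : ℕ) : Nat.count (· ∈ E) (n + i) =
      Nat.count (· ∈ {k | k + i ∈ E}) n + Nat.count (· ∈ E) i := Nat.count_add' _ _ _
  apply le_antisymm
  · simpa using upperDensity_le_div_mul_of_count_le (E := E) (D := 1) (C := i) one_pos fun n => by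
      have := Nat.count_add (· ∈ E) n i
      have := Nat.count_le (fun k => n + k ∈ E) (n := i)
      rw [one_mul, one_mul]
      linarith [hcount n]
  · simpa using upperDensity_le_div_mul_of_count_le (F := E) (D := 1) one_pos fun n => by
      rw [one_mul, one_mul, ← hcount n]
      exact Nat.count_monotone _ (n.le_add_right i)

theorem upperDensity_int_add (P : ℤ → Prop) (r : ℤ) :
    upperDensity {k : ℕ | P (k + r)} = upperDensity {k : ℕ | P k} := by
  obtain ⟨i, rfl | rfl⟩ := r.eq_nat_or_neg
  · exact_mod_cast upperDensity_preimage_add_right {k : ℕ | P k} i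
  · simpa using (upperDensity_preimage_add_right {k : ℕ | P (k + -i)} i).symm

theorem one_div_le_upperDensity_of_syndetic {N : ℕ} (hN : 0 < N)
    (h : ∀ b, ∃ s < N, b + s ∈ E) : 1 / N ≤ upperDensity E := by
  classical
  have hwindow (n : ℕ) : n ≤ Nat.count (· ∈ E) (N * n) := by
    induction n with
    | zero => simp
    | succ n ih =>
      obtain ⟨s, hs, hmem⟩ := h (N * n)
      rw [mul_add_one, Nat.count_add]
      have : Nat.count (fun k => N * n + k ∈ E) N ≠ 0 := Nat.count_ne_iff_exists.2 ⟨s, hs, hmem⟩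
      omega
  simpa [upperDensity_univ] using
    div_mul_upperDensity_le_of_le_count (E := univ) (D := 1) hN fun n => by
      simpa [Nat.count_true] using hwindow n

end UpperDensity

section CantorDist

variable {A : Type*} {x y : ℤ → A}

theorem shift_iterate_apply (x : ℤ → A) (k : ℕ) (n : ℤ) : shift^[k] x n = x (n + k) := by
  induction k generalizing n with
  | zero => simp
  | succ k ih =>
    rw [Function.iterate_succ_apply', shift, ih]
    push_cast
    ring_nf

theorem cantorDist_self (x : ℤ → A) : cantorDist x x = 0 := if_pos rfl

theorem one_le_cantorDist (h : x 0 ≠ y 0) : 1 ≤ cantorDist x y := by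
  have hmin : sInf {n : ℕ | ∃ k : ℤ, k.natAbs = n ∧ x k ≠ y k} = 0 :=
    Nat.sInf_eq_zero.2 (.inl ⟨0, rfl, h⟩)
  rw [cantorDist, if_neg (ne_of_apply_ne (· 0) h), hmin]
  simp

theorem exists_ne_of_two_zpow_neg_lt_cantorDist {m : ℕ}
    (h : (2 : ℝ) ^ (-(m : ℤ)) < cantorDist x y) : ∃ r ∈ Finset.Icc (-m : ℤ) m, x r ≠ y r := by
  have hxy : x ≠ y := by
    rintro rfl
    exact absurd h (by rw [cantorDist_self, not_lt]; positivity)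
  obtain ⟨k₀, hk₀⟩ := Function.ne_iff.1 hxy
  obtain ⟨k, hk, hne⟩ := Nat.sInf_mem
    (⟨_, k₀, rfl, hk₀⟩ : {n : ℕ | ∃ k : ℤ, k.natAbs = n ∧ x k ≠ y k}.Nonempty)
  rw [cantorDist, if_neg hxy, ← hk, zpow_lt_zpow_iff_right₀ one_lt_two] at h
  exact ⟨k, Finset.mem_Icc.2 (by omega), hne⟩

theorem besD1_le_Ddelta_cantorDist (x y : ℤ → A) : besD1 x y ≤ Ddelta cantorDist 1 x y :=
  upperDensity_mono fun k (hk : x k ≠ y k) =>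
    one_le_cantorDist (by simpa only [shift_iterate_apply, zero_add] using hk)

theorem Ddelta_cantorDist_le {δ : ℝ} {m : ℕ} (hm : (2 : ℝ) ^ (-(m : ℤ)) < δ) (x y : ℤ → A) :
    Ddelta cantorDist δ x y ≤ (2 * m + 1) * besD1 x y := by
  calc Ddelta cantorDist δ x y
      ≤ upperDensity (⋃ r ∈ Finset.Icc (-m : ℤ) m, {k : ℕ | x (k + r) ≠ y (k + r)}) :=
        upperDensity_mono fun k (hk : δ ≤ _) => by
          obtain ⟨r, hr, hne⟩ := exists_ne_of_two_zpow_neg_lt_cantorDist (hm.trans_le hk)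
          simp only [shift_iterate_apply, add_comm r] at hne
          exact mem_biUnion hr hne
    _ ≤ ∑ r ∈ Finset.Icc (-m : ℤ) m, upperDensity {k : ℕ | x (k + r) ≠ y (k + r)} :=
        upperDensity_biUnion_le _ _
    _ = ∑ _r ∈ Finset.Icc (-m : ℤ) m, besD1 x y :=
        Finset.sum_congr rfl fun r _ => upperDensity_int_add (fun n => x n ≠ y n) r
    _ = (2 * m + 1) * besD1 x y := by
        have hcard : (m + 1 - -m : ℤ).toNat = 2 * m + 1 := by omega
        rw [Finset.sum_const, Int.card_Icc, hcard, nsmul_eq_mul]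
        push_cast
        rfl

end CantorDist

section LogRatio

theorem logRatio_mono {s t : ℕ∞} (hst : s ≤ t) {ν : ℝ} (hν0 : 0 ≤ ν) (hν1 : ν ≤ 1) :
    logRatio s ν ≤ logRatio t ν := by
  rcases eq_or_ne t ⊤ with rfl | ht
  · simp [logRatio]
  lift t to ℕ using ht
  lift s to ℕ using ne_top_of_le_ne_top (ENat.natCast_ne_top t) hst
  have hν : 0 ≤ -Real.log ν := neg_nonneg.2 (Real.log_nonpos hν0 hν1)
  have hlog : Real.log s ≤ Real.log t := by
    rcases s.eq_zero_or_pos with rfl | hs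
    · simpa using Real.log_natCast_nonneg t
    · exact Real.log_le_log (by positivity) (mod_cast hst)
  simp only [logRatio, ENat.natCast_ne_top, if_false, ENat.toNat_natCast]
  gcongr

theorem logRatio_natCast_pow (B n : ℕ) (ν : ℝ) :
    logRatio ((B ^ n : ℕ) : ℕ∞) ν = ENNReal.ofReal (n * Real.log B / -Real.log ν) := by
  rw [logRatio, if_neg (ENat.natCast_ne_top _), ENat.toNat_natCast, Nat.cast_pow, Real.log_pow]

/-- `Real.logb ρ (ν / c) + e` is the solution `n` of `ν = c * ρ ^ n`, up to a rounding error. -/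
theorem tendsto_logb_mul_div_neg_log {ρ c : ℝ} (hρ0 : 0 < ρ) (hρ1 : ρ < 1) (hc : 0 < c)
    (L e : ℝ) :
    Tendsto (fun ν => (Real.logb ρ (ν / c) + e) * L / -Real.log ν) (𝓝[>] 0)
      (𝓝 (L / -Real.log ρ)) := by
  have hlogρ : Real.log ρ ≠ 0 := (Real.log_neg hρ0 hρ1).ne
  have hlog : Tendsto (fun ν => -Real.log ν) (𝓝[>] 0) atTop :=
    tendsto_neg_atBot_atTop.comp Real.tendsto_log_nhdsGT_zero
  have hlim : Tendsto (fun ν => (e - Real.log c / Real.log ρ) * L / -Real.log ν + L / -Real.log ρ)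
      (𝓝[>] 0) (𝓝 (0 + L / -Real.log ρ)) := (hlog.const_div_atTop _).add_const _
  rw [zero_add] at hlim
  refine hlim.congr' ?_
  filter_upwards [self_mem_nhdsWithin, hlog.eventually_gt_atTop 0] with ν (hν0 : 0 < ν) hν
  have hν' : Real.log ν ≠ 0 := by linarith
  rw [Real.logb, Real.log_div hν0.ne' hc.ne']
  field_simp
  ring

theorem eventually_zero_lt_and_lt {c : ℝ} (hc : 0 < c) : ∀ᶠ ν : ℝ in 𝓝[>] 0, 0 < ν ∧ ν < c :=
  Ioo_mem_nhdsGT hc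

variable {f : ℝ → ℕ∞} {ρ c : ℝ} {B : ℕ}

theorem le_liminf_logRatio (hρ0 : 0 < ρ) (hρ1 : ρ < 1) (hc : 0 < c)
    (h : ∀ (n : ℕ) (ν : ℝ), 0 < ν → ν ≤ c * ρ ^ n → ((B ^ n : ℕ) : ℕ∞) ≤ f ν) :
    ENNReal.ofReal (Real.log B / -Real.log ρ) ≤
      liminf (fun ν => logRatio (f ν) ν) (𝓝[>] 0) := by
  have hlim := ENNReal.tendsto_ofReal
    (tendsto_logb_mul_div_neg_log hρ0 hρ1 hc (Real.log B) (-1))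
  rw [← hlim.liminf_eq]
  refine liminf_le_liminf ?_
  filter_upwards [eventually_zero_lt_and_lt hc, eventually_zero_lt_and_lt one_pos]
    with ν ⟨hν0, hνc⟩ ⟨_, hν1⟩
  set t := Real.logb ρ (ν / c)
  have ht0 : 0 ≤ t := Real.logb_nonneg_of_base_lt_one hρ0 hρ1 (by positivity)
    ((div_le_one hc).2 hνc.le)
  have hscale : ν ≤ c * ρ ^ ⌊t⌋₊ := by
    rw [← div_le_iff₀' hc, ← Real.rpow_natCast,
      ← Real.le_logb_iff_rpow_le_of_base_lt_one hρ0 hρ1 (by positivity)]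
    exact Nat.floor_le ht0
  have hlogν : 0 ≤ -Real.log ν := neg_nonneg.2 (Real.log_nonpos hν0.le hν1.le)
  calc ENNReal.ofReal ((t + -1) * Real.log B / -Real.log ν)
      ≤ ENNReal.ofReal (⌊t⌋₊ * Real.log B / -Real.log ν) := by
        have := Nat.lt_floor_add_one t
        have := Real.log_natCast_nonneg B
        gcongr
        linarith
    _ = logRatio ((B ^ ⌊t⌋₊ : ℕ) : ℕ∞) ν := (logRatio_natCast_pow _ _ _).symm
    _ ≤ logRatio (f ν) ν := logRatio_mono (h _ ν hν0 hscale) hν0.le hν1.le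

theorem limsup_logRatio_le (hρ0 : 0 < ρ) (hρ1 : ρ < 1) (hc : 0 < c)
    (h : ∀ (n : ℕ) (ν : ℝ), c * ρ ^ n < ν → f ν ≤ ((B ^ n : ℕ) : ℕ∞)) :
    limsup (fun ν => logRatio (f ν) ν) (𝓝[>] 0) ≤
      ENNReal.ofReal (Real.log B / -Real.log ρ) := by
  have hlim := ENNReal.tendsto_ofReal
    (tendsto_logb_mul_div_neg_log hρ0 hρ1 hc (Real.log B) 1)
  rw [← hlim.limsup_eq]
  refine limsup_le_limsup ?_
  filter_upwards [eventually_zero_lt_and_lt hc, eventually_zero_lt_and_lt one_pos]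
    with ν ⟨hν0, hνc⟩ ⟨_, hν1⟩
  set t := Real.logb ρ (ν / c)
  have ht0 : 0 ≤ t := Real.logb_nonneg_of_base_lt_one hρ0 hρ1 (by positivity)
    ((div_le_one hc).2 hνc.le)
  have hscale : c * ρ ^ (⌊t⌋₊ + 1) < ν := by
    rw [← lt_div_iff₀' hc, ← Real.rpow_natCast,
      ← Real.logb_lt_iff_lt_rpow_of_base_lt_one hρ0 hρ1 (by positivity)]
    exact_mod_cast Nat.lt_floor_add_one t
  have hlogν : 0 ≤ -Real.log ν := neg_nonneg.2 (Real.log_nonpos hν0.le hν1.le)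
  calc logRatio (f ν) ν
      ≤ logRatio ((B ^ (⌊t⌋₊ + 1) : ℕ) : ℕ∞) ν := logRatio_mono (h _ ν hscale) hν0.le hν1.le
    _ = ENNReal.ofReal ((⌊t⌋₊ + 1 : ℕ) * Real.log B / -Real.log ν) := logRatio_natCast_pow _ _ _
    _ ≤ ENNReal.ofReal ((t + 1) * Real.log B / -Real.log ν) := by
        have := Real.log_natCast_nonneg B
        push_cast
        gcongr
        exact Nat.floor_le ht0

end LogRatio

section AmorphicComplexity

variable {α : Type*} {d : α → α → ℝ} {f : α → α} {X : Set α}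

theorem acLower_le_acUpper (d : α → α → ℝ) (f : α → α) (X : Set α) :
    acLower d f X ≤ acUpper d f X :=
  iSup₂_mono fun _ _ => liminf_le_limsup

theorem card_le_sepNum {ι : Type*} [Fintype ι] {δ ν : ℝ} (hself : ∀ x, d x x < δ) (hν : 0 < ν)
    {g : ι → α} (hg : ∀ i, g i ∈ X)
    (hsep : Pairwise fun i j => ν ≤ upperDensity {k | δ ≤ d (f^[k] (g i)) (f^[k] (g j))}) :
    (Fintype.card ι : ℕ∞) ≤ sepNum d f X δ ν := by
  have hinj : Function.Injective g := fun i j hij => by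
    by_contra hne
    have := hsep hne
    simp only [hij, (hself _).not_ge, ofPred_false, upperDensity_empty] at this
    exact this.not_gt hν
  have hset : IsSepSet d f X δ ν (range g) := by
    refine ⟨range_subset_iff.2 hg, ?_⟩
    rintro _ ⟨i, rfl⟩ _ ⟨j, rfl⟩ hne
    exact hsep (ne_of_apply_ne g hne)
  calc (Fintype.card ι : ℕ∞) = (range g).encard := by
        rw [← image_univ, hinj.encard_image, encard_univ, ENat.card_eq_coe_fintype_card]
    _ ≤ sepNum d f X δ ν := le_iSup₂ (f := fun S (_ : IsSepSet d f X δ ν S) => S.encard) _ hset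

theorem ofReal_log_div_le_acLower {δ r c : ℝ} {B : ℕ} (hδ : 0 < δ) (hself : ∀ x, d x x < δ)
    (hr0 : 0 < r) (hr1 : r < 1) (hc : 0 < c)
    (h : ∀ n, ∃ g : Fin (B ^ n) → α, (∀ i, g i ∈ X) ∧
      Pairwise fun i j => c * r ^ n ≤ upperDensity {k | δ ≤ d (f^[k] (g i)) (f^[k] (g j))}) :
    ENNReal.ofReal (Real.log B / -Real.log r) ≤ acLower d f X := by
  refine (le_liminf_logRatio hr0 hr1 hc fun n ν hν0 hν => ?_).trans
    (le_iSup₂ (f := fun δ (_ : 0 < δ) => liminf (fun ν => logRatio (sepNum d f X δ ν) ν) (𝓝[>] 0))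
      δ hδ)
  obtain ⟨g, hg, hsep⟩ := h n
  simpa using card_le_sepNum hself hν0 hg fun i j hij => hν.trans (hsep hij)

theorem acUpper_le_ofReal_log_div {r : ℝ} {B : ℕ} (hr0 : 0 < r) (hr1 : r < 1)
    (h : ∀ δ > 0, ∃ c > 0, ∀ (n : ℕ) (ν : ℝ) (S : Set α), c * r ^ n < ν →
      IsSepSet d f X δ ν S → S.encard ≤ (B ^ n : ℕ)) :
    acUpper d f X ≤ ENNReal.ofReal (Real.log B / -Real.log r) := by
  refine iSup₂_le fun δ hδ => ?_
  obtain ⟨c, hc, hcard⟩ := h δ hδ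
  exact limsup_logRatio_le hr0 hr1 hc fun n ν hν => iSup₂_le fun S hS => hcard n ν S hν hS

end AmorphicComplexity

section Substitution

variable {A : Type*} {ℓ : ℕ} (hℓ : 0 < ℓ) (θ : A → Fin ℓ → A)

theorem substApply_mul_add (x : ℤ → A) (n : ℤ) (i : Fin ℓ) :
    substApply hℓ θ x (ℓ * n + i) = θ (x n) i := by
  have hdiv : (ℓ * n + i : ℤ) / ℓ = n := by
    rw [add_comm, Int.add_mul_ediv_left _ _ (by omega), Int.ediv_eq_zero_of_lt] <;> omega
  have hmod : (ℓ * n + i : ℤ) % ℓ = i := by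
    rw [add_comm, Int.add_mul_emod_self_left, Int.emod_eq_of_lt] <;> omega
  simp only [substApply, hdiv, hmod, Int.toNat_natCast]

theorem substApply_iterate_congr (k : ℕ) {x y : ℤ → A} {n m : ℤ} (h : x n = y m) {i : ℕ}
    (hi : i < ℓ ^ k) :
    (substApply hℓ θ)^[k] x (ℓ ^ k * n + i) = (substApply hℓ θ)^[k] y (ℓ ^ k * m + i) := by
  induction k generalizing i with
  | zero =>
    obtain rfl : i = 0 := by simpa using hi
    simpa using h
  | succ k ih =>
    have hsplit (n : ℤ) : (ℓ ^ (k + 1) * n + i : ℤ) =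
        ℓ * (ℓ ^ k * n + (i / ℓ : ℕ)) + ((⟨i % ℓ, i.mod_lt hℓ⟩ : Fin ℓ) : ℕ) := by
      have := congrArg ((↑) : ℕ → ℤ) (Nat.div_add_mod i ℓ)
      push_cast at this ⊢
      linear_combination -this
    rw [Function.iterate_succ_apply', Function.iterate_succ_apply', hsplit n, hsplit m,
      substApply_mul_add, substApply_mul_add,
      ih (Nat.div_lt_of_lt_mul (by rwa [← pow_succ']))]

/-- The power `θ ^ k`, a substitution of constant length `ℓ ^ k`. -/
def substPow (k : ℕ) : A → Fin (ℓ ^ k) → A := fun a j => (substApply hℓ θ)^[k] (fun _ => a) j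

theorem substApply_iterate_mul_add (k : ℕ) (x : ℤ → A) (n : ℤ) (i : Fin (ℓ ^ k)) :
    (substApply hℓ θ)^[k] x (ℓ ^ k * n + i) = substPow hℓ θ k (x n) i := by
  simpa [substPow] using
    substApply_iterate_congr hℓ θ k (x := x) (n := n) (y := fun _ => x n) (m := 0) rfl i.isLt

theorem substApply_substPow (k : ℕ) :
    substApply (pow_pos hℓ k) (substPow hℓ θ k) = (substApply hℓ θ)^[k] := by
  ext x n
  have hpos : (0 : ℤ) < (ℓ ^ k : ℕ) := mod_cast pow_pos hℓ k
  obtain ⟨i, hi⟩ : ∃ i : Fin (ℓ ^ k), n = (ℓ ^ k : ℕ) * (n / (ℓ ^ k : ℕ)) + i :=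
    ⟨⟨(n % (ℓ ^ k : ℕ)).toNat, by have := Int.emod_lt_of_pos n hpos; omega⟩, by
      rw [Int.toNat_of_nonneg (Int.emod_nonneg n hpos.ne'), Int.mul_ediv_add_emod]⟩
  rw [hi, substApply_mul_add]
  push_cast
  exact (substApply_iterate_mul_add hℓ θ k x _ i).symm

theorem substApply_substPow_iterate (k m : ℕ) :
    (substApply (pow_pos hℓ k) (substPow hℓ θ k))^[m] = (substApply hℓ θ)^[k * m] := by
  rw [substApply_substPow, Function.iterate_mul]

/-- The extension of `θ` to one-sided sequences. -/
def substNat (x : ℕ → A) : ℕ → A := fun n => θ (x (n / ℓ)) ⟨n % ℓ, n.mod_lt hℓ⟩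

theorem substNat_mul_add (x : ℕ → A) (n : ℕ) (i : Fin ℓ) :
    substNat hℓ θ x (ℓ * n + i) = θ (x n) i := by
  simp [substNat, Nat.mul_add_div hℓ, Nat.div_eq_of_lt i.isLt, Nat.mod_eq_of_lt i.isLt]

theorem substNat_shift (x : ℕ → A) (t : ℕ) :
    substNat hℓ θ (fun n => x (n + t)) = fun n => substNat hℓ θ x (n + ℓ * t) := by
  ext n
  simp [substNat, Nat.add_mul_div_left _ _ hℓ]

theorem substNat_injective {θ : A → Fin ℓ → A} (hθ : Function.Injective θ) :
    Function.Injective (substNat hℓ θ) := fun x y h => by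
  ext n
  refine hθ (funext fun i => ?_)
  rw [← substNat_mul_add hℓ θ, ← substNat_mul_add hℓ θ, h]

theorem substApply_natCast (x : ℤ → A) :
    (fun n : ℕ => substApply hℓ θ x n) = substNat hℓ θ fun n : ℕ => x n := by
  ext n
  simp only [substApply, substNat]
  norm_cast

theorem substApply_iterate_natCast (k : ℕ) (x : ℤ → A) :
    (fun n : ℕ => (substApply hℓ θ)^[k] x n) = (substNat hℓ θ)^[k] fun n : ℕ => x n :=
  Function.Semiconj.iterate_right (f := fun (x : ℤ → A) (n : ℕ) => x n)
    (substApply_natCast hℓ θ) k x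

theorem substNat_substPow (k : ℕ) :
    substNat (pow_pos hℓ k) (substPow hℓ θ k) = (substNat hℓ θ)^[k] := by
  ext x n
  have h := substApply_natCast (pow_pos hℓ k) (substPow hℓ θ k) fun n => x n.toNat
  rw [substApply_substPow, substApply_iterate_natCast] at h
  exact (congrFun h n).symm

theorem substPow_injective {θ : A → Fin ℓ → A} (hθ : Function.Injective θ) (k : ℕ) :
    Function.Injective (substPow hℓ θ k) := fun a b h => by
  have hconst : substNat (pow_pos hℓ k) (substPow hℓ θ k) (fun _ => a) =
      substNat (pow_pos hℓ k) (substPow hℓ θ k) (fun _ => b) := by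
    ext n
    simp only [substNat, h]
  rw [substNat_substPow] at hconst
  exact congrFun ((substNat_injective hℓ hθ).iterate k hconst) 0

theorem exists_substPow_coincidence {θ : A → Fin ℓ → A} (h : ∃ j, ∀ a b, θ a j = θ b j) {k : ℕ}
    (hk : k ≠ 0) : ∃ j, ∀ a b, substPow hℓ θ k a j = substPow hℓ θ k b j := by
  obtain ⟨k, rfl⟩ := Nat.exists_eq_succ_of_ne_zero hk
  obtain ⟨j, hj⟩ := h
  refine ⟨⟨j, j.isLt.trans_le (Nat.le_self_pow hk ℓ)⟩, fun a b => ?_⟩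
  have hfirst (x : ℤ → A) : substApply hℓ θ x j = θ (x 0) j := by
    simpa using substApply_mul_add hℓ θ x 0 j
  simp only [substPow, Function.iterate_succ_apply', hfirst]
  exact hj _ _

/-- Every letter occurs in every word `θ a`: the incidence matrix of `θ` is positive. -/
def IsPositiveSubst {A : Type*} {ℓ : ℕ} (θ : A → Fin ℓ → A) : Prop := ∀ a b, ∃ i, θ a i = b

theorem isPositiveSubst_substPow_iff {m : ℕ} : IsPositiveSubst (substPow hℓ θ m) ↔
    ∀ a b, ∃ j : ℤ, 0 ≤ j ∧ j < (ℓ : ℤ) ^ m ∧ (substApply hℓ θ)^[m] (fun _ => a) j = b := by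
  refine forall₂_congr fun a b => ⟨fun ⟨i, hi⟩ => ⟨i, by positivity, mod_cast i.isLt, hi⟩, ?_⟩
  rintro ⟨j, hj0, hjm, hj⟩
  lift j to ℕ using hj0
  exact ⟨⟨j, mod_cast hjm⟩, hj⟩

variable {θ}

theorem IsPositiveSubst.substPow_of_le {m r : ℕ} (h : IsPositiveSubst (substPow hℓ θ m))
    (hmr : m ≤ r) : IsPositiveSubst (substPow hℓ θ r) := fun a b => by
  obtain ⟨s, rfl⟩ := Nat.exists_eq_add_of_le hmr
  obtain ⟨i, hi⟩ := h ((substApply hℓ θ)^[s] (fun _ => a) 0) b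
  refine ⟨⟨i, i.isLt.trans_le (Nat.pow_le_pow_right hℓ hmr)⟩, ?_⟩
  rw [← hi, ← substApply_iterate_mul_add, mul_zero, zero_add, ← Function.iterate_add_apply]
  rfl

theorem IsPrimitive.exists_isPositiveSubst (h : IsPrimitive hℓ θ) :
    ∃ m, 1 ≤ m ∧ ∀ r ≥ m, IsPositiveSubst (substPow hℓ θ r) := by
  obtain ⟨m, hm, hocc⟩ := h
  exact ⟨m, hm, fun r => ((isPositiveSubst_substPow_iff hℓ θ).2 hocc).substPow_of_le hℓ⟩

theorem isPrimitive_substPow (h : IsPrimitive hℓ θ) {k : ℕ} (hk : 1 ≤ k) :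
    IsPrimitive (pow_pos hℓ k) (substPow hℓ θ k) := by
  obtain ⟨m, hm, hpos⟩ := h.exists_isPositiveSubst
  refine ⟨m, hm, ?_⟩
  rw [substApply_substPow_iterate]
  push_cast
  simp only [← pow_mul]
  exact (isPositiveSubst_substPow_iff hℓ θ).1 (hpos _ (Nat.le_mul_of_pos_left m hk))

end Substitution

section Mismatch

variable {A : Type*} {ℓ : ℕ} (hℓ : 0 < ℓ) {θ : A → Fin ℓ → A}

/-- The Besicovitch pseudometric on one-sided sequences, so that `besD1 x y` is the
`mismatchDensity` of the right halves of `x` and `y`. -/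
noncomputable def mismatchDensity (x y : ℕ → A) : ℝ := upperDensity {n | x n ≠ y n}

theorem mismatchDensity_comm (x y : ℕ → A) : mismatchDensity x y = mismatchDensity y x := by
  simp only [mismatchDensity, ne_comm]

theorem mismatchDensity_shift (x y : ℕ → A) (i : ℕ) :
    mismatchDensity (fun n => x (n + i)) (fun n => y (n + i)) = mismatchDensity x y :=
  upperDensity_preimage_add_right {n | x n ≠ y n} i

theorem mismatchDensity_le_one (x y : ℕ → A) : mismatchDensity x y ≤ 1 :=
  upperDensity_univ ▸ upperDensity_mono (subset_univ _)

section Hamming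

variable [DecidableEq A]

theorem count_substNat_ne (x y : ℕ → A) (n : ℕ) :
    Nat.count (fun k => substNat hℓ θ x k ≠ substNat hℓ θ y k) (ℓ * n) =
      ∑ k ∈ Finset.range n, hammingDist (θ (x k)) (θ (y k)) := by
  induction n with
  | zero => simp
  | succ n ih =>
    rw [mul_add_one, Nat.count_add, ih, Finset.sum_range_succ, add_right_inj,
      Nat.count_eq_card_filter_range, Finset.card_filter, Finset.sum_range, hammingDist,
      Finset.card_filter]
    simp only [substNat_mul_add]

theorem div_mul_mismatchDensity_le {D : ℕ}
    (hD : Pairwise fun a b => D ≤ hammingDist (θ a) (θ b)) (x y : ℕ → A) :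
    D / ℓ * mismatchDensity x y ≤ mismatchDensity (substNat hℓ θ x) (substNat hℓ θ y) := by
  refine div_mul_upperDensity_le_of_le_count hℓ fun n => ?_
  simp only [mem_ofPred_eq]
  rw [count_substNat_ne, Nat.count_eq_card_filter_range, Finset.card_filter, Finset.mul_sum]
  refine Finset.sum_le_sum fun k _ => ?_
  split_ifs with hk
  · simpa using hD hk
  · simp

theorem mismatchDensity_substNat_le {D : ℕ}
    (hD : Pairwise fun a b => hammingDist (θ a) (θ b) ≤ D) (x y : ℕ → A) :
    mismatchDensity (substNat hℓ θ x) (substNat hℓ θ y) ≤ D / ℓ * mismatchDensity x y := by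
  refine upperDensity_le_div_mul_of_count_le (C := 0) hℓ fun n => ?_
  simp only [mem_ofPred_eq, add_zero]
  rw [count_substNat_ne, Nat.count_eq_card_filter_range, Finset.card_filter, Finset.mul_sum]
  refine Finset.sum_le_sum fun k _ => ?_
  split_ifs with hk
  · simpa using hD hk
  · simp [not_not.1 hk]

end Hamming

theorem pow_mul_mismatchDensity_le {F : (ℕ → A) → ℕ → A} {r : ℝ} (hr : 0 ≤ r)
    (h : ∀ x y, r * mismatchDensity x y ≤ mismatchDensity (F x) (F y)) (n : ℕ) (x y : ℕ → A) :
    r ^ n * mismatchDensity x y ≤ mismatchDensity (F^[n] x) (F^[n] y) := by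
  induction n with
  | zero => simp
  | succ n ih =>
    rw [Function.iterate_succ_apply', Function.iterate_succ_apply', pow_succ', mul_assoc]
    exact (mul_le_mul_of_nonneg_left ih hr).trans (h _ _)

theorem mismatchDensity_iterate_le {F : (ℕ → A) → ℕ → A} {r : ℝ} (hr : 0 ≤ r)
    (h : ∀ x y, mismatchDensity (F x) (F y) ≤ r * mismatchDensity x y) (n : ℕ) (x y : ℕ → A) :
    mismatchDensity (F^[n] x) (F^[n] y) ≤ r ^ n * mismatchDensity x y := by
  induction n with
  | zero => simp
  | succ n ih =>
    rw [Function.iterate_succ_apply', Function.iterate_succ_apply', pow_succ', mul_assoc]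
    exact (h _ _).trans (mul_le_mul_of_nonneg_left ih hr)

end Mismatch

section EventualPeriod

variable {A : Type*} {u : ℕ → A} {P : ℕ}

/-- `P` is a period of a tail of the sequence `u`. -/
def IsEventualPeriod (u : ℕ → A) (P : ℕ) : Prop := ∃ K, ∀ k ≥ K, u (k + P) = u k

theorem IsEventualPeriod.exists_forall_add_mul (h : IsEventualPeriod u P) :
    ∃ K, ∀ k ≥ K, ∀ c, u (k + P * c) = u k := by
  obtain ⟨K, hK⟩ := h
  refine ⟨K, fun k hk c => ?_⟩
  induction c with
  | zero => simp
  | succ c ih => rw [mul_add_one, ← add_assoc, hK _ (by omega), ih]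

theorem isEventualPeriod_of_shift_eq {s t : ℕ} (h : ∀ k, u (k + s) = u (k + t)) (hst : s ≤ t) :
    IsEventualPeriod u (t - s) :=
  ⟨s, fun k hk => by simpa [show k - s + t = k + (t - s) by omega, hk] using (h (k - s)).symm⟩

variable {ℓ : ℕ} {hℓ : 0 < ℓ} {θ : A → Fin ℓ → A} (hu : substNat hℓ θ u = u)

include hu

theorem apply_mul_add_of_substNat_eq (n : ℕ) (i : Fin ℓ) : u (ℓ * n + i) = θ (u n) i := by
  rw [← substNat_mul_add hℓ θ, hu]

theorem substNat_substPow_eq_of_substNat_eq (k : ℕ) :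
    substNat (pow_pos hℓ k) (substPow hℓ θ k) u = u := by
  rw [substNat_substPow, Function.iterate_fixed hu]

theorem IsEventualPeriod.div_gcd (hθ : Function.Injective θ) (h : IsEventualPeriod u P) :
    IsEventualPeriod u (P / P.gcd ℓ) := by
  obtain ⟨K, hK⟩ := h.exists_forall_add_mul
  refine ⟨K, fun n hn => hθ (funext fun i => ?_)⟩
  have hswap : ℓ * (P / P.gcd ℓ) = P * (ℓ / P.gcd ℓ) := by
    rw [← Nat.mul_div_assoc _ (P.gcd_dvd_left ℓ), ← Nat.mul_div_assoc _ (P.gcd_dvd_right ℓ),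
      mul_comm]
  rw [← apply_mul_add_of_substNat_eq hu, ← apply_mul_add_of_substNat_eq hu, mul_add, hswap,
    add_right_comm]
  exact hK _ (hn.trans ((Nat.le_mul_of_pos_left n hℓ).trans (Nat.le_add_right _ _))) _

theorem IsEventualPeriod.exists_coprime (hθ : Function.Injective θ) (hP : 0 < P)
    (h : IsEventualPeriod u P) : ∃ P', P'.Coprime ℓ ∧ IsEventualPeriod u P' := by
  induction P using Nat.strong_induction_on with
  | _ P ih =>
    by_cases hcop : P.Coprime ℓ
    · exact ⟨P, hcop, h⟩
    · have hgcd : 1 < P.gcd ℓ := by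
        have := Nat.gcd_pos_of_pos_left ℓ hP
        rw [Nat.Coprime] at hcop
        omega
      exact ih _ (Nat.div_lt_self hP hgcd) (Nat.div_pos (Nat.gcd_le_left ℓ hP) (by omega))
        (h.div_gcd hu hθ)

theorem IsEventualPeriod.eventuallyConst {j : Fin ℓ} (hj : ∀ a b, θ a j = θ b j)
    (hP : P.Coprime ℓ) (h : IsEventualPeriod u P) : ∃ c K, ∀ k ≥ K, u k = c := by
  obtain ⟨K, hK⟩ := h.exists_forall_add_mul
  refine ⟨θ (u 0) j, K, fun k hk => ?_⟩
  obtain ⟨m, -, hm⟩ := Nat.exists_mul_mod_eq_of_coprime (j + (ℓ - 1) * k) hP hℓ.ne'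
  have hmod : k + P * m ≡ j [MOD ℓ] := by
    calc k + P * m ≡ k + (j + (ℓ - 1) * k) [MOD ℓ] := Nat.ModEq.add_left k hm
      _ = j + ℓ * k := by obtain ⟨l, rfl⟩ := Nat.exists_eq_add_of_lt hℓ; simp; ring
      _ ≡ j [MOD ℓ] := by simp [Nat.ModEq]
  have hblock : k + P * m = ℓ * ((k + P * m) / ℓ) + j := by
    conv_lhs => rw [← Nat.div_add_mod (k + P * m) ℓ, hmod, Nat.mod_eq_of_lt j.isLt]
  rw [← hK k hk m, hblock, apply_mul_add_of_substNat_eq hu, hj]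

theorem exists_lt_two_mul_apply_eq (hpos : IsPositiveSubst θ) (b : ℕ) (a : A) :
    ∃ e < 2 * ℓ, u (b + e) = a := by
  obtain ⟨i, hi⟩ := hpos (u (b / ℓ + 1)) a
  rw [← apply_mul_add_of_substNat_eq hu] at hi
  have := Nat.div_add_mod b ℓ
  have := Nat.mod_lt b hℓ
  have hb : b ≤ ℓ * (b / ℓ + 1) + i := by rw [mul_add_one]; omega
  exact ⟨ℓ * (b / ℓ + 1) + i - b, by rw [mul_add_one]; omega, by rwa [Nat.add_sub_cancel' hb]⟩

theorem not_isEventualPeriod [Nontrivial A] (hθ : Function.Injective θ)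
    (hpos : IsPositiveSubst θ) (hcoin : ∃ j, ∀ a b, θ a j = θ b j) (hP : 0 < P) :
    ¬ IsEventualPeriod u P := fun h => by
  obtain ⟨j, hj⟩ := hcoin
  obtain ⟨P', hP', h'⟩ := h.exists_coprime hu hθ hP
  obtain ⟨c, K, hconst⟩ := h'.eventuallyConst hu hj hP'
  obtain ⟨a, ha⟩ := exists_ne c
  obtain ⟨e, -, he⟩ := exists_lt_two_mul_apply_eq hu hpos K a
  exact ha (he ▸ hconst _ (Nat.le_add_right K e))

end EventualPeriod

section Recognizability

variable {A : Type*} {ℓ : ℕ} {hℓ : 0 < ℓ} {θ : A → Fin ℓ → A} {u : ℕ → A}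

theorem IsPositiveSubst.one_lt [Nontrivial A] (h : IsPositiveSubst θ) : 1 < ℓ := by
  obtain ⟨a, b, hab⟩ := exists_pair_ne A
  obtain ⟨i, hi⟩ := h a a
  obtain ⟨j, hj⟩ := h a b
  have hij : i ≠ j := by rintro rfl; exact hab (hi.symm.trans hj)
  omega

theorem exists_aligned_offset {q d i j : ℕ} (hq : 0 < q) (hd : d ∣ q) (hij : ¬ i ≡ j [MOD d]) :
    ∃ o ≤ q, ∃ t ≤ q, ∃ b c, j + o = q * b ∧ i + o + t = q * c ∧ ¬ d ∣ t := by
  have hround (n : ℕ) : ∃ o ≤ q, ∃ b, n + o = q * b :=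
    ⟨q - n % q, Nat.sub_le _ _, n / q + 1, by
      have := Nat.div_add_mod n q
      have := Nat.mod_lt n hq
      rw [mul_add_one]
      omega⟩
  obtain ⟨o, ho, b, hb⟩ := hround j
  obtain ⟨t, ht, c, hc⟩ := hround (i + o)
  refine ⟨o, ho, t, ht, b, c, hb, hc, fun hdt => hij (Nat.ModEq.add_right_cancel' o ?_)⟩
  have hi : d ∣ i + o := (Nat.dvd_add_left hdt).1 (hc ▸ hd.mul_right c)
  have hj : d ∣ j + o := hb ▸ hd.mul_right b
  exact ((Nat.modEq_zero_iff_dvd).2 hi).trans ((Nat.modEq_zero_iff_dvd).2 hj).symm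

variable (hu : substNat hℓ θ u = u)

include hu

theorem apply_mul_add_congr {n m i : ℕ} (h : u n = u m) (hi : i < ℓ) :
    u (ℓ * n + i) = u (ℓ * m + i) := by
  have hblock (n : ℕ) := apply_mul_add_of_substNat_eq hu n ⟨i, hi⟩
  exact (hblock n).trans (h ▸ (hblock m).symm)

theorem apply_mul_add_congr_of_pair {n m i : ℕ} (h : u n = u m) (h' : u (n + 1) = u (m + 1))
    (hi : i < 2 * ℓ) : u (ℓ * n + i) = u (ℓ * m + i) := by
  obtain hlt | hle := lt_or_ge i ℓ
  · exact apply_mul_add_congr hu h hlt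
  · obtain ⟨i, rfl⟩ := Nat.exists_eq_add_of_le hle
    simpa only [mul_add_one, add_assoc] using apply_mul_add_congr hu h' (i := i) (by omega)

theorem exists_prefix_recurrence [Nontrivial A] (hpos : IsPositiveSubst θ) (L : ℕ) :
    ∃ R, ∀ b, ∃ e ≤ R, ∀ s < L, u (b + e + s) = u s := by
  refine ⟨ℓ ^ L * (2 * ℓ + 1), fun b => ?_⟩
  obtain ⟨e, he, heq⟩ := exists_lt_two_mul_apply_eq hu hpos (b / ℓ ^ L + 1) (u 0)
  have hb := Nat.div_add_mod b (ℓ ^ L)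
  have hmod := Nat.mod_lt b (pow_pos hℓ L)
  have hstart : ℓ ^ L * (b / ℓ ^ L + 1 + e) = b + (ℓ ^ L * (e + 1) - b % ℓ ^ L) := by
    simp only [mul_add, mul_one]
    omega
  refine ⟨ℓ ^ L * (e + 1) - b % ℓ ^ L,
    (Nat.sub_le _ _).trans (Nat.mul_le_mul_left _ (by omega)), fun s hs => ?_⟩
  have hlt : s < ℓ ^ L := hs.trans (Nat.lt_pow_self hpos.one_lt)
  rw [← hstart, apply_mul_add_congr (substNat_substPow_eq_of_substNat_eq hu L) heq hlt]
  simp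

theorem exists_pair_recurrence [Finite A] [Nontrivial A] (hpos : IsPositiveSubst θ) :
    ∃ R, ∀ i b, ∃ e ≤ R, u (b + e) = u i ∧ u (b + e + 1) = u (i + 1) := by
  obtain ⟨L, hL⟩ := (finite_range (rangeSplitting fun i => (u i, u (i + 1)))).bddAbove
  obtain ⟨R, hR⟩ := exists_prefix_recurrence hu hpos (L + 2)
  refine ⟨R + L, fun i b => ?_⟩
  let p : range fun i => (u i, u (i + 1)) := ⟨_, mem_range_self i⟩
  obtain ⟨k, hk, hki⟩ : ∃ k ≤ L, (u k, u (k + 1)) = (u i, u (i + 1)) :=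
    ⟨_, hL (mem_range_self p), apply_rangeSplitting (fun i => (u i, u (i + 1))) p⟩
  obtain ⟨e, he, heq⟩ := hR b
  rw [Prod.mk.injEq] at hki
  refine ⟨e + k, by omega, ?_, ?_⟩
  · rw [← hki.1, ← heq k (by omega), add_assoc]
  · rw [← hki.2, ← heq (k + 1) (by omega)]
    simp only [add_assoc]

/-- The pair of letters at `n` recurs within the long repeated window. There the copy of the window
at `i` exhibits the word at offset `t` in the image of this pair as a block of `θ`. -/
theorem exists_misaligned_blocks {R d i j : ℕ} (hd : d ∣ ℓ)
    (hrec : ∀ i b, ∃ e ≤ R, u (b + e) = u i ∧ u (b + e + 1) = u (i + 1))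
    (hwin : ∀ s < ℓ * (R + 4), u (i + s) = u (j + s)) (hij : ¬ i ≡ j [MOD d]) :
    ∃ t ≤ ℓ, ¬ d ∣ t ∧ ∀ n, ∃ a, ∀ s : Fin ℓ, θ a s = u (ℓ * n + (t + s)) := by
  obtain ⟨o, ho, t, ht, b, c, hb, hc, hdt⟩ := exists_aligned_offset hℓ hd hij
  refine ⟨t, ht, hdt, fun n => ?_⟩
  obtain ⟨e, he, hn, hn'⟩ := hrec n b
  refine ⟨u (c + e), fun s => ?_⟩
  have hmul : ℓ * e ≤ ℓ * R := Nat.mul_le_mul_left _ he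
  calc θ (u (c + e)) s = u (ℓ * (c + e) + s) := (apply_mul_add_of_substNat_eq hu _ _).symm
    _ = u (i + (o + ℓ * e + (t + s))) := by rw [mul_add, ← hc]; congr 1; ring
    _ = u (j + (o + ℓ * e + (t + s))) := hwin _ (by rw [mul_add]; omega)
    _ = u (ℓ * (b + e) + (t + s)) := by rw [mul_add, ← hb]; congr 1; ring
    _ = u (ℓ * n + (t + s)) := apply_mul_add_congr_of_pair hu hn hn' (by omega)

theorem exists_substNat_eq_shift {t : ℕ} (hθ : Function.Injective θ) (ht : t ≤ ℓ)
    (hblocks : ∀ n, ∃ a, ∀ s : Fin ℓ, θ a s = u (ℓ * n + (t + s))) :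
    ∃ y : ℕ → A, substNat hℓ θ y = (fun n => u (n + t)) ∧
      ∃ f : A × A → A, ∀ n, y n = f (u n, u (n + 1)) := by
  choose y hy using hblocks
  refine ⟨y, funext fun n => ?_, ?_⟩
  · rw [substNat, hy, add_left_comm, Nat.div_add_mod, add_comm]
  · have hfac : Function.FactorsThrough y fun n => (u n, u (n + 1)) := fun n m h => by
      rw [Prod.mk.injEq] at h
      refine hθ (funext fun s => ?_)
      rw [hy, hy, apply_mul_add_congr_of_pair hu h.1 h.2 (by omega)]
    have : Nonempty A := ⟨u 0⟩
    obtain ⟨f, hf⟩ := (Function.factorsThrough_iff _).1 hfac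
    exact ⟨f, congrFun hf⟩

theorem exists_substPow_desubstitution [Finite A] [Nontrivial A] (hθ : Function.Injective θ)
    (hpos : IsPositiveSubst θ)
    (hbad : ∀ N, ∃ i j, (∀ s < N, u (i + s) = u (j + s)) ∧ ¬ i ≡ j [MOD ℓ]) {M : ℕ} (hM : M ≠ 0) :
    ∃ t, ¬ ℓ ∣ t ∧ ∃ y : ℕ → A, (substNat hℓ θ)^[M] y = (fun n => u (n + t)) ∧
      ∃ f : A × A → A, ∀ n, y n = f (u n, u (n + 1)) := by
  obtain ⟨R, hR⟩ := exists_pair_recurrence hu hpos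
  obtain ⟨i, j, hwin, hij⟩ := hbad (ℓ ^ M * (R + 4))
  have huM := substNat_substPow_eq_of_substNat_eq hu M
  obtain ⟨t, ht, hdt, hblocks⟩ :=
    exists_misaligned_blocks huM (dvd_pow_self ℓ hM) hR hwin hij
  refine ⟨t, hdt, ?_⟩
  rw [← substNat_substPow]
  exact exists_substNat_eq_shift huM (substPow_injective hℓ hθ M) ht hblocks

/-- If recognizability fails, every power of `θ` desubstitutes a shift of `u` by a misaligned
offset through a two-block code. Two powers share the same code, which makes two different shifts
of `u` coincide. -/
theorem exists_recognizability_window [Finite A] [Nontrivial A] (hθ : Function.Injective θ)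
    (hpos : IsPositiveSubst θ) (hcoin : ∃ j, ∀ a b, θ a j = θ b j) :
    ∃ N, ∀ i j, (∀ s < N, u (i + s) = u (j + s)) → i ≡ j [MOD ℓ] := by
  by_contra! hbad
  have hdesub (M : ℕ) := exists_substPow_desubstitution hu hθ hpos hbad M.succ_ne_zero
  choose t ht y hy f hf using hdesub
  obtain ⟨n, m, hnm, hfnm⟩ : ∃ n m, n < m ∧ f n = f m := by
    obtain ⟨n, m, hne, h⟩ := Finite.exists_ne_map_eq_of_infinite f
    exact hne.lt_or_gt.elim (⟨n, m, ·, h⟩) (⟨m, n, ·, h.symm⟩)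
  have hynm : y m = y n := funext fun k => by rw [hf, hf, hfnm]
  have hshift (k : ℕ) : u (k + t m) = u (k + ℓ ^ (m - n) * t n) := by
    have hsplit : m.succ = (m - n) + (n + 1) := by omega
    have h := hy m
    rw [hynm, hsplit, Function.iterate_add_apply, hy n, ← substNat_substPow, substNat_shift,
      substNat_substPow_eq_of_substNat_eq hu] at h
    exact (congrFun h k).symm
  have hne : t m ≠ ℓ ^ (m - n) * t n := fun h =>
    ht m (h ▸ (dvd_pow_self ℓ (by omega)).mul_right _)
  rcases hne.lt_or_gt with h | h
  · exact not_isEventualPeriod hu hθ hpos hcoin (Nat.sub_pos_of_lt h)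
      (isEventualPeriod_of_shift_eq hshift h.le)
  · exact not_isEventualPeriod hu hθ hpos hcoin (Nat.sub_pos_of_lt h)
      (isEventualPeriod_of_shift_eq (fun k => (hshift k).symm) h.le)

end Recognizability

section LowerBound

variable {A : Type*} {ℓ : ℕ} {hℓ : 0 < ℓ} {θ : A → Fin ℓ → A} {r : ℝ} {u : ℕ → A}

theorem exists_pos_le_mismatchDensity_shift [Finite A] [Nontrivial A]
    (hu : substNat hℓ θ u = u) (hθ : Function.Injective θ) (hpos : IsPositiveSubst θ)
    (hcoin : ∃ j, ∀ a b, θ a j = θ b j) :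
    ∃ c > 0, ∀ t, ¬ ℓ ∣ t → c ≤ mismatchDensity u fun n => u (n + t) := by
  obtain ⟨N, hN⟩ := exists_recognizability_window hu hθ hpos hcoin
  refine ⟨1 / (N + 1 : ℕ), by positivity, fun t ht =>
    one_div_le_upperDensity_of_syndetic N.succ_pos fun b => ?_⟩
  by_contra! hsame
  have hmod : b ≡ b + t [MOD ℓ] := hN _ _ fun s hs => by
    rw [add_right_comm]
    exact not_not.1 (hsame s (by omega))
  exact ht (by simpa using (Nat.modEq_iff_dvd' (Nat.le_add_right b t)).1 hmod)

theorem mul_pow_le_mismatchDensity_shift {c : ℝ} (hu : substNat hℓ θ u = u) (hℓ1 : 1 < ℓ)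
    (hc : 0 ≤ c) (hbase : ∀ t, ¬ ℓ ∣ t → c ≤ mismatchDensity u fun n => u (n + t))
    (hr0 : 0 ≤ r) (hr1 : r ≤ 1)
    (hmis : ∀ x y, r * mismatchDensity x y ≤ mismatchDensity (substNat hℓ θ x) (substNat hℓ θ y))
    {n d : ℕ} (hd0 : d ≠ 0) (hd : d < ℓ ^ n) :
    c * r ^ n ≤ mismatchDensity u fun k => u (k + d) := by
  obtain ⟨m, t, ht, rfl⟩ := Nat.exists_eq_pow_mul_and_not_dvd hd0 ℓ hℓ1.ne'
  have hmn : m < n := (Nat.pow_lt_pow_iff_right hℓ1).1 <|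
    (Nat.le_mul_of_pos_right _ (Nat.pos_of_ne_zero (right_ne_zero_of_mul hd0))).trans_lt hd
  have hiter : (substNat hℓ θ)^[m] (fun k => u (k + t)) = fun k => u (k + ℓ ^ m * t) := by
    rw [← substNat_substPow, substNat_shift, substNat_substPow_eq_of_substNat_eq hu]
  calc c * r ^ n ≤ mismatchDensity u (fun k => u (k + t)) * r ^ m :=
        mul_le_mul (hbase t ht) (pow_le_pow_of_le_one hr0 hr1 hmn.le) (by positivity)
          (hc.trans (hbase t ht))
    _ ≤ mismatchDensity ((substNat hℓ θ)^[m] u) ((substNat hℓ θ)^[m] fun k => u (k + t)) := by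
        rw [mul_comm]
        exact pow_mul_mismatchDensity_le hr0 hmis m _ _
    _ = mismatchDensity u fun k => u (k + ℓ ^ m * t) := by rw [Function.iterate_fixed hu, hiter]

theorem le_mismatchDensity_shift_shift {B : ℕ} {c : ℝ}
    (h : ∀ d, d ≠ 0 → d < B → c ≤ mismatchDensity u fun k => u (k + d)) {i j : ℕ} (hij : i ≠ j)
    (hi : i < B) (hj : j < B) :
    c ≤ mismatchDensity (fun k => u (k + i)) fun k => u (k + j) := by
  wlog hlt : i < j generalizing i j
  · rw [mismatchDensity_comm]
    exact this hij.symm hj hi (by omega)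
  · obtain ⟨d, rfl⟩ := Nat.exists_eq_add_of_lt hlt
    simpa only [add_assoc] using
      (h (d + 1) (by omega) (by omega)).trans (mismatchDensity_shift _ _ i).ge

variable [Finite A] [Nontrivial A] [TopologicalSpace A]

theorem IsPositiveSubst.ofReal_log_div_le_acLower_orbitClosure (hpos : IsPositiveSubst θ)
    (hθ : Function.Injective θ) (hcoin : ∃ j, ∀ a b, θ a j = θ b j) (hr0 : 0 < r) (hr1 : r < 1)
    (hmis : ∀ x y, r * mismatchDensity x y ≤ mismatchDensity (substNat hℓ θ x) (substNat hℓ θ y))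
    {x₀ : ℤ → A} (hx₀ : substApply hℓ θ x₀ = x₀) :
    ENNReal.ofReal (Real.log ℓ / -Real.log r) ≤ acLower cantorDist shift (orbitClosure x₀) := by
  have hu : substNat hℓ θ (fun n : ℕ => x₀ n) = fun n : ℕ => x₀ n := by
    rw [← substApply_natCast, hx₀]
  obtain ⟨c, hc, hbase⟩ := exists_pos_le_mismatchDensity_shift hu hθ hpos hcoin
  have hself (x : ℤ → A) : cantorDist x x < 1 := by simp [cantorDist_self]
  refine ofReal_log_div_le_acLower one_pos hself hr0 hr1 hc fun n =>
    ⟨fun i m => x₀ (m + i), fun i => subset_closure ⟨i, rfl⟩, fun i j hij =>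
      le_trans ?_ (besD1_le_Ddelta_cantorDist _ _)⟩
  simpa [mismatchDensity, besD1] using le_mismatchDensity_shift_shift
    (fun d => mul_pow_le_mismatchDensity_shift hu hpos.one_lt hc.le hbase hr0.le hr1.le hmis)
    (Fin.val_ne_of_ne hij) i.isLt j.isLt

theorem IsPrimitive.ofReal_log_div_le_acLower_orbitClosure (hprim : IsPrimitive hℓ θ)
    (hθ : Function.Injective θ) (hcoin : ∃ j, ∀ a b, θ a j = θ b j) (hr0 : 0 < r) (hr1 : r < 1)
    (hmis : ∀ x y, r * mismatchDensity x y ≤ mismatchDensity (substNat hℓ θ x) (substNat hℓ θ y))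
    {x₀ : ℤ → A} {p : ℕ} (hp : 1 ≤ p) (hper : (substApply hℓ θ)^[p] x₀ = x₀) :
    ENNReal.ofReal (Real.log ℓ / -Real.log r) ≤ acLower cantorDist shift (orbitClosure x₀) := by
  obtain ⟨m, hm, hpos⟩ := hprim.exists_isPositiveSubst
  have hP : p * m ≠ 0 := by positivity
  have hfix : substApply (pow_pos hℓ (p * m)) (substPow hℓ θ (p * m)) x₀ = x₀ := by
    rw [substApply_substPow, Function.iterate_mul, Function.iterate_fixed hper]
  have h := (hpos (p * m) (Nat.le_mul_of_pos_left m hp)).ofReal_log_div_le_acLower_orbitClosure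
    (hℓ := pow_pos hℓ (p * m)) (r := r ^ (p * m)) (substPow_injective hℓ hθ _)
    (exists_substPow_coincidence hℓ hcoin hP) (by positivity) (pow_lt_one₀ hr0.le hr1 hP)
    (by rw [substNat_substPow]; exact pow_mul_mismatchDensity_le hr0.le hmis _) hfix
  rwa [Nat.cast_pow, Real.log_pow, Real.log_pow, ← mul_neg,
    mul_div_mul_left _ _ (Nat.cast_ne_zero.2 hP)] at h

end LowerBound

section UpperBound

variable {A : Type*} {ℓ : ℕ} (hℓ : 0 < ℓ) (θ : A → Fin ℓ → A)

theorem substApply_shift (x : ℤ → A) (q : ℤ) :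
    substApply hℓ θ (fun n => x (n + q)) = fun n => substApply hℓ θ x (n + ℓ * q) := by
  ext n
  have hℓ' : (ℓ : ℤ) ≠ 0 := mod_cast hℓ.ne'
  simp only [substApply, Int.add_mul_ediv_left _ _ hℓ', Int.add_mul_emod_self_left]

theorem continuous_substApply [TopologicalSpace A] [DiscreteTopology A] :
    Continuous (substApply hℓ θ) :=
  continuous_pi fun n => (continuous_of_discreteTopology (f := fun a => θ a _)).comp
    (continuous_apply (n / (ℓ : ℤ)))

variable {hℓ θ}

theorem exists_eq_substApply_shift [Finite A] [TopologicalSpace A] [DiscreteTopology A]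
    {x x₀ : ℤ → A} (hx : x ∈ orbitClosure (substApply hℓ θ x₀)) :
    ∃ (j : Fin ℓ) (z : ℤ → A), x = fun n => substApply hℓ θ z (n + j) := by
  let G (j : Fin ℓ) (z : ℤ → A) : ℤ → A := fun n => substApply hℓ θ z (n + j)
  have hG (j : Fin ℓ) : Continuous (G j) :=
    continuous_pi fun n => (continuous_apply (n + j : ℤ)).comp (continuous_substApply hℓ θ)
  have hclosed : IsClosed (⋃ j, range (G j)) :=
    isClosed_iUnion_of_finite fun j => (isCompact_range (hG j)).isClosed
  have horbit : {y | ∃ k : ℤ, y = fun n => substApply hℓ θ x₀ (n + k)} ⊆ ⋃ j, range (G j) := by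
    rintro _ ⟨k, rfl⟩
    have hpos : (0 : ℤ) < ℓ := mod_cast hℓ
    obtain ⟨j, hj⟩ := Int.eq_ofNat_of_zero_le (Int.emod_nonneg k hpos.ne')
    have hlt := Int.emod_lt_of_pos k hpos
    refine mem_iUnion.2 ⟨⟨j, by omega⟩, fun n => x₀ (n + k / ℓ), ?_⟩
    simp only [G, substApply_shift, ← hj, add_assoc, Int.emod_add_mul_ediv]
  obtain ⟨j, z, hz⟩ := mem_iUnion.1 (closure_minimal horbit hclosed hx)
  exact ⟨j, z, hz.symm⟩

theorem besD1_shift (x y : ℤ → A) (j : ℕ) :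
    besD1 (fun n => x (n + j)) (fun n => y (n + j)) = besD1 x y := by
  simpa [mismatchDensity, besD1] using
    mismatchDensity_shift (fun n : ℕ => x n) (fun n : ℕ => y n) j

theorem besD1_substApply_iterate_le {r : ℝ} (hr : 0 ≤ r)
    (hmis : ∀ x y, mismatchDensity (substNat hℓ θ x) (substNat hℓ θ y) ≤ r * mismatchDensity x y)
    (n : ℕ) (x y : ℤ → A) :
    besD1 ((substApply hℓ θ)^[n] x) ((substApply hℓ θ)^[n] y) ≤ r ^ n := by
  have h := mismatchDensity_iterate_le hr hmis n (fun n : ℕ => x n) fun n : ℕ => y n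
  rw [← substApply_iterate_natCast, ← substApply_iterate_natCast] at h
  exact h.trans (mul_le_of_le_one_right (by positivity) (mismatchDensity_le_one _ _))

theorem exists_substApply_iterate_eq {x₀ : ℤ → A} {p : ℕ} (hp : 1 ≤ p)
    (hper : (substApply hℓ θ)^[p] x₀ = x₀) (n : ℕ) : ∃ x, (substApply hℓ θ)^[n] x = x₀ := by
  obtain ⟨p, rfl⟩ := Nat.exists_eq_add_of_le' hp
  refine ⟨(substApply hℓ θ)^[p * n] x₀, ?_⟩
  rw [← Function.iterate_add_apply, add_comm, ← add_one_mul, Function.iterate_mul,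
    Function.iterate_fixed hper]

variable [Finite A] [TopologicalSpace A] [DiscreteTopology A] {x₀ : ℤ → A} {p : ℕ} {r : ℝ}

/-- Two points of a separated set with the same offset modulo `ℓ ^ n` desubstitute `n` times, so
they are too close to be separated. -/
theorem IsSepSet.encard_le_pow {δ ν : ℝ} {m n : ℕ} {S : Set (ℤ → A)}
    (hS : IsSepSet cantorDist shift (orbitClosure x₀) δ ν S) (hp : 1 ≤ p)
    (hper : (substApply hℓ θ)^[p] x₀ = x₀) (hr : 0 ≤ r)
    (hmis : ∀ x y, mismatchDensity (substNat hℓ θ x) (substNat hℓ θ y) ≤ r * mismatchDensity x y)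
    (hm : 2 ^ (-(m : ℤ)) < δ) (hν : (2 * m + 1) * r ^ n < ν) : S.encard ≤ (ℓ ^ n : ℕ) := by
  have hdesub (x : S) : ∃ (j : Fin (ℓ ^ n)) (z : ℤ → A),
      x.1 = fun i => (substApply hℓ θ)^[n] z (i + j) := by
    obtain ⟨x', hx'⟩ := exists_substApply_iterate_eq hp hper n
    rw [← substApply_substPow] at hx' ⊢
    exact exists_eq_substApply_shift (hx' ▸ hS.1 x.2)
  choose J z hz using hdesub
  have hJ : Function.Injective J := fun x y hxy => by
    by_contra hne
    have hclose : besD1 x.1 y.1 ≤ r ^ n := by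
      rw [hz x, hz y, hxy, besD1_shift]
      exact besD1_substApply_iterate_le hr hmis n _ _
    have hle := calc ν ≤ Ddelta cantorDist δ x.1 y.1 := hS.2 _ x.2 _ y.2 (Subtype.coe_ne_coe.2 hne)
      _ ≤ (2 * m + 1) * besD1 x.1 y.1 := Ddelta_cantorDist_le hm _ _
      _ ≤ (2 * m + 1) * r ^ n := by gcongr
    exact hle.not_gt hν
  simpa using ENat.card_le_card_of_injective hJ

theorem acUpper_orbitClosure_le_ofReal_log_div (hp : 1 ≤ p)
    (hper : (substApply hℓ θ)^[p] x₀ = x₀) (hr0 : 0 < r) (hr1 : r < 1)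
    (hmis : ∀ x y, mismatchDensity (substNat hℓ θ x) (substNat hℓ θ y) ≤ r * mismatchDensity x y) :
    acUpper cantorDist shift (orbitClosure x₀) ≤ ENNReal.ofReal (Real.log ℓ / -Real.log r) := by
  refine acUpper_le_ofReal_log_div hr0 hr1 fun δ hδ => ?_
  obtain ⟨m, hm⟩ := exists_pow_lt_of_lt_one hδ (one_half_lt_one (α := ℝ))
  rw [one_div, inv_pow, ← zpow_natCast, ← zpow_neg] at hm
  exact ⟨2 * m + 1, by positivity, fun n ν S hν hS => hS.encard_le_pow hp hper hr0.le hmis hm hν⟩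

end UpperBound

section Coincidences

variable {A : Type*} {ℓ : ℕ} {θ : A → Fin ℓ → A}

theorem coincCount_add_hammingDist [DecidableEq A] (θ : A → Fin ℓ → A) (a b : A) :
    coincCount θ a b + hammingDist (θ a) (θ b) = ℓ := by
  have h := Finset.card_filter_add_card_filter_not (s := .univ) fun j => θ a j = θ b j
  rw [Finset.card_univ, Fintype.card_fin] at h
  simp only [coincCount, hammingDist]
  convert h

theorem coincCount_le (θ : A → Fin ℓ → A) (a b : A) : coincCount θ a b ≤ ℓ := by
  classical exact (coincCount_add_hammingDist θ a b).le.trans' (Nat.le_add_right _ _)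

theorem bddAbove_coincCount (θ : A → Fin ℓ → A) :
    BddAbove {n | ∃ a b, a ≠ b ∧ coincCount θ a b = n} :=
  ⟨ℓ, by rintro _ ⟨a, b, -, rfl⟩; exact coincCount_le θ a b⟩

theorem coincCount_le_cMax {a b : A} (hab : a ≠ b) : coincCount θ a b ≤ cMax θ :=
  le_csSup (bddAbove_coincCount θ) ⟨a, b, hab, rfl⟩

theorem cMin_le_coincCount {a b : A} (hab : a ≠ b) : cMin θ ≤ coincCount θ a b :=
  Nat.sInf_le ⟨a, b, hab, rfl⟩

theorem sub_cMax_le_hammingDist [DecidableEq A] :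
    Pairwise fun a b => ℓ - cMax θ ≤ hammingDist (θ a) (θ b) := fun a b hab => by
  have := coincCount_add_hammingDist θ a b
  have := coincCount_le_cMax (θ := θ) hab
  omega

theorem hammingDist_le_sub_cMin [DecidableEq A] :
    Pairwise fun a b => hammingDist (θ a) (θ b) ≤ ℓ - cMin θ := fun a b hab => by
  have := coincCount_add_hammingDist θ a b
  have := cMin_le_coincCount (θ := θ) hab
  omega

section Nontrivial

variable [Nontrivial A]

theorem nonempty_coincCount (θ : A → Fin ℓ → A) :
    {n | ∃ a b, a ≠ b ∧ coincCount θ a b = n}.Nonempty :=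
  let ⟨a, b, hab⟩ := exists_pair_ne A
  ⟨_, a, b, hab, rfl⟩

theorem cMin_le_cMax (θ : A → Fin ℓ → A) : cMin θ ≤ cMax θ :=
  let ⟨_, _, hab⟩ := exists_pair_ne A
  (cMin_le_coincCount hab).trans (coincCount_le_cMax hab)

theorem cMax_lt (hθ : Function.Injective θ) : cMax θ < ℓ := by
  classical
  obtain ⟨a, b, hab, h⟩ := Nat.sSup_mem (nonempty_coincCount θ) (bddAbove_coincCount θ)
  have hcMax : coincCount θ a b = cMax θ := h
  have := coincCount_add_hammingDist θ a b
  have := hammingDist_pos.2 (hθ.ne hab)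
  omega

theorem cMin_pos (hcoin : ∃ j, ∀ a b, θ a j = θ b j) : 0 < cMin θ := by
  obtain ⟨a, b, -, h⟩ := Nat.sInf_mem (nonempty_coincCount θ)
  obtain ⟨j, hj⟩ := hcoin
  have hcMin : coincCount θ a b = cMin θ := h
  rw [← hcMin]
  exact Finset.card_pos.2 ⟨j, by simp [hj a b]⟩

end Nontrivial

theorem log_sub_log_sub_natCast {n c : ℕ} (hc : c < n) :
    Real.log n - Real.log (n - c) = -Real.log ((n - c : ℕ) / n) := by
  rw [← Nat.cast_sub hc.le, Real.log_div (Nat.cast_ne_zero.2 (Nat.sub_pos_of_lt hc).ne')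
    (Nat.cast_ne_zero.2 (by omega)), neg_sub]

theorem one_le_log_div_log_sub_log {n c : ℕ} (hc0 : 0 < c) (hc : c < n) :
    1 ≤ Real.log n / (Real.log n - Real.log (n - c)) := by
  rw [← Nat.cast_sub hc.le]
  have hpos : 0 ≤ Real.log (n - c : ℕ) := Real.log_natCast_nonneg _
  have hlt : Real.log (n - c : ℕ) < Real.log n :=
    Real.log_lt_log (by simpa using hc) (mod_cast Nat.sub_lt (by omega) hc0)
  rw [one_le_div (by linarith)]
  linarith

theorem natCast_sub_div_lt_one {n c : ℕ} (hc0 : 0 < c) (hc : c < n) :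
    ((n - c : ℕ) : ℝ) / n < 1 := by
  rw [div_lt_one (Nat.cast_pos.2 (by omega)), Nat.cast_lt]
  omega

variable [Finite A] [Nontrivial A] [TopologicalSpace A] {hℓ : 0 < ℓ} {x₀ : ℤ → A} {p : ℕ}

theorem IsPrimitive.ofReal_log_div_cMax_le_acLower (hprim : IsPrimitive hℓ θ)
    (hθ : Function.Injective θ) (hcoin : ∃ j, ∀ a b, θ a j = θ b j) (hp : 1 ≤ p)
    (hper : (substApply hℓ θ)^[p] x₀ = x₀) :
    ENNReal.ofReal (Real.log ℓ / (Real.log ℓ - Real.log (ℓ - cMax θ))) ≤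
      acLower cantorDist shift (orbitClosure x₀) := by
  classical
  have hlt : cMax θ < ℓ := cMax_lt hθ
  have hpos : 0 < cMax θ := (cMin_pos hcoin).trans_le (cMin_le_cMax θ)
  rw [log_sub_log_sub_natCast hlt]
  exact hprim.ofReal_log_div_le_acLower_orbitClosure hθ hcoin
    (div_pos (Nat.cast_pos.2 (Nat.sub_pos_of_lt hlt)) (Nat.cast_pos.2 hℓ))
    (natCast_sub_div_lt_one hpos hlt) (div_mul_mismatchDensity_le hℓ sub_cMax_le_hammingDist)
    hp hper

theorem acUpper_le_ofReal_log_div_cMin [DiscreteTopology A] (hθ : Function.Injective θ)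
    (hcoin : ∃ j, ∀ a b, θ a j = θ b j) (hp : 1 ≤ p) (hper : (substApply hℓ θ)^[p] x₀ = x₀) :
    acUpper cantorDist shift (orbitClosure x₀) ≤
      ENNReal.ofReal (Real.log ℓ / (Real.log ℓ - Real.log (ℓ - cMin θ))) := by
  classical
  have hlt : cMin θ < ℓ := (cMin_le_cMax θ).trans_lt (cMax_lt hθ)
  rw [log_sub_log_sub_natCast hlt]
  exact acUpper_orbitClosure_le_ofReal_log_div hp hper
    (div_pos (Nat.cast_pos.2 (Nat.sub_pos_of_lt hlt)) (Nat.cast_pos.2 hℓ))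
    (natCast_sub_div_lt_one (cMin_pos hcoin) hlt)
    (mismatchDensity_substNat_le hℓ hammingDist_le_sub_cMin)

end Coincidences

/-- If `θ` is a one-to-one primitive substitution of constant length
`ℓ` with a coincidence of order `k` and `X_θ` is infinite, then, with `Θ = θ^k` (of
constant length `ℓ^k`),
`1 ≤ log|Θ|/(log|Θ| - log(|Θ| - C(Θ))) ≤ ac_ ≤ ac¯ ≤ log|Θ|/(log|Θ| - log(|Θ| - c(Θ))) < ∞`. -/
theorem substitution_one_to_one_coincidence_ac_bounds
    {A : Type} [Fintype A] [TopologicalSpace A] [DiscreteTopology A]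
    {ℓ : ℕ} (hℓ : 0 < ℓ) (θ : A → Fin ℓ → A) (hprim : IsPrimitive hℓ θ)
    (hinj : Function.Injective θ)
    (k : ℕ) (hk : 1 ≤ k)
    (hcoin : ∃ j : ℤ, 0 ≤ j ∧ j < (ℓ : ℤ) ^ k ∧ ∀ a b : A,
      (substApply hℓ θ)^[k] (fun _ => a) j = (substApply hℓ θ)^[k] (fun _ => b) j)
    (x₀ : ℤ → A) (p : ℕ) (hp : 1 ≤ p) (hper : (substApply hℓ θ)^[p] x₀ = x₀)
    (hinf : (orbitClosure x₀).Infinite)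
    (Θ : A → Fin (ℓ ^ k) → A)
    (hΘ : ∀ (a : A) (j : Fin (ℓ ^ k)), Θ a j = (substApply hℓ θ)^[k] (fun _ => a) ((j : ℕ) : ℤ)) :
    1 ≤ ENNReal.ofReal
        (Real.log (ℓ ^ k : ℕ) / (Real.log (ℓ ^ k : ℕ) - Real.log ((ℓ ^ k : ℝ) - cMax Θ))) ∧
    ENNReal.ofReal
        (Real.log (ℓ ^ k : ℕ) / (Real.log (ℓ ^ k : ℕ) - Real.log ((ℓ ^ k : ℝ) - cMax Θ))) ≤
      acLower cantorDist shift (orbitClosure x₀) ∧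
    acLower cantorDist shift (orbitClosure x₀) ≤ acUpper cantorDist shift (orbitClosure x₀) ∧
    acUpper cantorDist shift (orbitClosure x₀) ≤
      ENNReal.ofReal
        (Real.log (ℓ ^ k : ℕ) / (Real.log (ℓ ^ k : ℕ) - Real.log ((ℓ ^ k : ℝ) - cMin Θ))) ∧
    ENNReal.ofReal
        (Real.log (ℓ ^ k : ℕ) / (Real.log (ℓ ^ k : ℕ) - Real.log ((ℓ ^ k : ℝ) - cMin Θ))) < ⊤ := by
  have : Nontrivial A := by
    by_contra hA
    rw [not_nontrivial_iff_subsingleton] at hA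
    exact hinf (toFinite _)
  obtain rfl : Θ = substPow hℓ θ k := funext₂ hΘ
  have hprim' := isPrimitive_substPow hℓ hprim hk
  have hinj' := substPow_injective hℓ hinj k
  have hcoin' : ∃ j, ∀ a b, substPow hℓ θ k a j = substPow hℓ θ k b j := by
    obtain ⟨j, hj0, hjk, hj⟩ := hcoin
    lift j to ℕ using hj0
    exact ⟨⟨j, mod_cast hjk⟩, hj⟩
  have hper' : (substApply (pow_pos hℓ k) (substPow hℓ θ k))^[p] x₀ = x₀ := by
    rw [substApply_substPow_iterate, mul_comm, Function.iterate_mul, Function.iterate_fixed hper]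
  rw [← Nat.cast_pow, ENNReal.one_le_ofReal]
  exact ⟨one_le_log_div_log_sub_log ((cMin_pos hcoin').trans_le (cMin_le_cMax _)) (cMax_lt hinj'),
    hprim'.ofReal_log_div_cMax_le_acLower hinj' hcoin' hp hper', acLower_le_acUpper _ _ _,
    acUpper_le_ofReal_log_div_cMin hinj' hcoin' hp hper', ENNReal.ofReal_lt_top⟩
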